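/- arXiv:2605.26188 — 3 statements merged into one kernel-verified Lean document; each statement's English description precedes it below -/
import Mathlib

section
/- For any real numbers u, v, η with η > 0 such that [u, u+η] ⊆ [0,1] and [v, v+η] ⊆ [0,1], for all sufficiently large n there exists an integer a satisfying: 1 ≤ a < F_n, gcd(a, F_n) = 1, a/F_n ∈ [u, u+η], and the fractional part {F_{n−1}·a / F_n} ∈ [v, v+η]. -/
/-!
The points `(a, b)` with `F_{n-1} a ≡ b [ZMOD F_n]` form a lattice. Writing `n = j + l + 1` with
`j ≤ l ≤ j + 1`, d'Ocagne's identity shows that it contains `(F_j, ± F_{l+1})` and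
`(F_{j+1}, ∓ F_l)`, two independent vectors of length `O(√F_n)`, so it has a point within
`O(√F_n)` of any target. Taking as target the centre of the box
`[u F_n, (u+η) F_n] × [v F_n, (v+η) F_n]`, a further translation by `t (F_j, ± F_{l+1})` makes the
first coordinate prime to `F_n`. Some `t < 2 ^ ω(F_n)` does this, and `2 ^ ω(m) = o(√m)`, so the
point stays in the box.

The bound on `t` rests on the theorem of Crittenden and Vanden Eynden that `k` congruence classes
covering `2 ^ k` consecutive integers cover all of them: `t` is covered iff
`∏ i, (1 - ζ i ^ (c i + t * b i))` vanishes, with `ζ i` a primitive `n i`-th root of unity, and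
this product expands into a sum of `2 ^ k` geometric progressions in `t`, which vanishes
identically as soon as its first `2 ^ k` values do.
-/

open Asymptotics Filter Finset Polynomial

lemma sum_mul_pow_eq_zero_of_forall_lt_card {ι R : Type*} [CommRing R] (S : Finset ι)
    (c z : ι → R) (h : ∀ t < #S, ∑ i ∈ S, c i * z i ^ t = 0) (t : ℕ) :
    ∑ i ∈ S, c i * z i ^ t = 0 := by
  nontriviality R
  let P : R[X] := ∏ i ∈ S, (X - C (z i))
  have hP : P.Monic := monic_prod_X_sub_C _ _
  have hdeg : P.degree ≤ #S := by simp [P, degree_prod_of_monic, monic_X_sub_C]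
  have reduce : ∀ i ∈ S, z i ^ t = ∑ j : Fin #S, (X ^ t %ₘ P).coeff j * z i ^ (j : ℕ) := by
    intro i hi
    have hroot : P.eval (z i) = 0 := by
      rw [eval_prod]
      exact prod_eq_zero hi (by simp)
    calc z i ^ t = (X ^ t %ₘ P + P * (X ^ t /ₘ P)).eval (z i) := by simp [modByMonic_add_div]
      _ = (X ^ t %ₘ P).eval (z i) := by simp [hroot]
      _ = _ := by
        conv_lhs => rw [← sum_modByMonic_coeff hP hdeg]
        simp [eval_finsetSum]
  calc ∑ i ∈ S, c i * z i ^ t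
      = ∑ i ∈ S, ∑ j : Fin #S, (X ^ t %ₘ P).coeff j * (c i * z i ^ (j : ℕ)) := by
        refine sum_congr rfl fun i hi ↦ ?_
        rw [reduce i hi, mul_sum]
        exact sum_congr rfl fun j _ ↦ mul_left_comm ..
    _ = ∑ j : Fin #S, (X ^ t %ₘ P).coeff j * ∑ i ∈ S, c i * z i ^ (j : ℕ) := by
        simp only [sum_comm (s := S), mul_sum]
    _ = 0 := sum_eq_zero fun j _ ↦ by rw [h j j.isLt, mul_zero]

lemma exists_dvd_add_mul_of_forall_lt_two_pow_card {ι : Type*} (S : Finset ι) {n : ι → ℕ}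
    (hn : ∀ i ∈ S, n i ≠ 0) (b c : ι → ℤ)
    (h : ∀ t : ℕ, t < 2 ^ #S → ∃ i ∈ S, (n i : ℤ) ∣ c i + t * b i) (t : ℕ) :
    ∃ i ∈ S, (n i : ℤ) ∣ c i + t * b i := by
  let ζ : ι → ℂ := fun i ↦ Complex.exp (2 * Real.pi * Complex.I / n i)
  have hζ : ∀ i, ζ i ≠ 0 := fun i ↦ Complex.exp_ne_zero _
  have covered_iff : ∀ t : ℕ, (∃ i ∈ S, (n i : ℤ) ∣ c i + t * b i) ↔
      ∏ i ∈ S, (1 - ζ i ^ (c i + t * b i)) = 0 := by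
    intro t
    simp only [prod_eq_zero_iff, sub_eq_zero, eq_comm (a := (1 : ℂ))]
    refine exists_congr fun i ↦ and_congr_right fun hi ↦ ?_
    exact ((Complex.isPrimitiveRoot_exp _ (hn i hi)).zpow_eq_one_iff_dvd _).symm
  have expand : ∀ t : ℕ, ∏ i ∈ S, (1 - ζ i ^ (c i + t * b i)) =
      ∑ T ∈ S.powerset, (∏ i ∈ T, -ζ i ^ c i) * (∏ i ∈ T, ζ i ^ b i) ^ t := by
    intro t
    simp only [sub_eq_add_neg, prod_one_add, ← prod_pow, ← prod_mul_distrib]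
    refine sum_congr rfl fun T _ ↦ prod_congr rfl fun i _ ↦ ?_
    rw [zpow_add₀ (hζ i), mul_comm (t : ℤ), zpow_mul, zpow_natCast, neg_mul]
  rw [covered_iff, expand]
  refine sum_mul_pow_eq_zero_of_forall_lt_card _ _ _ (fun s hs ↦ ?_) t
  rw [← expand, ← covered_iff]
  exact h s (by simpa using hs)

lemma exists_lt_two_pow_card_primeFactors_isCoprime_add_mul {m : ℕ} (hm : m ≠ 0) {b : ℤ}
    (hb : IsCoprime b m) (c : ℤ) :
    ∃ t : ℕ, t < 2 ^ #m.primeFactors ∧ IsCoprime (c + t * b) m := by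
  by_contra! hbad
  have : NeZero m := ⟨hm⟩
  have covered : ∀ t : ℕ, t < 2 ^ #m.primeFactors →
      ∃ p ∈ m.primeFactors, (p : ℤ) ∣ c + t * b := by
    intro t ht
    obtain ⟨p, hp, hpc⟩ := Nat.exists_prime_and_dvd (mt Int.isCoprime_iff_gcd_eq_one.2 (hbad t ht))
    obtain ⟨hpz, hpm⟩ := Int.dvd_coe_gcd_iff.1 (Int.natCast_dvd_natCast.2 hpc)
    exact ⟨p, hp.mem_primeFactors (Int.natCast_dvd_natCast.1 hpm) hm, hpz⟩
  let t : ℕ := (((1 - c) * (b : ZMod m)⁻¹ : ZMod m)).val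
  have ht : ((c + t * b : ℤ) : ZMod m) = 1 := by
    have hbu : IsUnit (b : ZMod m) := (ZMod.coe_int_isUnit_iff_isCoprime b m).2 hb.symm
    simp [t, mul_assoc, ZMod.inv_mul_of_unit _ hbu]
  have hcop : IsCoprime (m : ℤ) (c + t * b) :=
    (ZMod.coe_int_isUnit_iff_isCoprime _ m).1 (ht ▸ isUnit_one)
  obtain ⟨p, hp, hpt⟩ := exists_dvd_add_mul_of_forall_lt_two_pow_card m.primeFactors
    (fun _ hp ↦ (Nat.prime_of_mem_primeFactors hp).ne_zero) (fun _ ↦ b) (fun _ ↦ c) covered t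
  exact (Nat.prime_iff_prime_int.1 (Nat.prime_of_mem_primeFactors hp)).not_isUnit
    (hcop.isUnit_of_dvd' (Int.natCast_dvd_natCast.2 (Nat.dvd_of_mem_primeFactors hp)) hpt)

lemma pow_card_primeFactors_le (k : ℕ) {m : ℕ} (hm : m ≠ 0) :
    k ^ #m.primeFactors ≤ k ^ k * m := by
  obtain rfl | hk := k.eq_zero_or_pos
  · exact (pow_le_one₀ le_rfl zero_le_one).trans (by simpa using Nat.one_le_iff_ne_zero.2 hm)
  have hsmall : #{p ∈ m.primeFactors | p < k} ≤ k := by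
    simpa using card_le_card (s := {p ∈ m.primeFactors | p < k}) (t := range k)
      fun _ hp ↦ mem_range.2 (mem_filter.1 hp).2
  calc k ^ #m.primeFactors
      = ∏ _p ∈ m.primeFactors, k := (prod_const k).symm
    _ ≤ ∏ p ∈ m.primeFactors, (if p < k then k else 1) * p := by
        refine prod_le_prod' fun p hp ↦ ?_
        split_ifs with hpk
        · exact Nat.le_mul_of_pos_right k (Nat.prime_of_mem_primeFactors hp).pos
        · simpa using hpk
    _ = k ^ #{p ∈ m.primeFactors | p < k} * ∏ p ∈ m.primeFactors, p := by
        rw [prod_mul_distrib, ← prod_filter, prod_const]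
    _ ≤ k ^ k * m :=
        Nat.mul_le_mul (Nat.pow_le_pow_right hk hsmall)
          (Nat.le_of_dvd (Nat.pos_of_ne_zero hm) (Nat.prod_primeFactors_dvd m))

lemma isLittleO_pow_card_primeFactors (k : ℕ) {ε : ℝ} (hε : 0 < ε) :
    (fun m : ℕ ↦ (k : ℝ) ^ #m.primeFactors) =o[atTop] fun m ↦ (m : ℝ) ^ ε := by
  obtain ⟨r, hr⟩ := exists_nat_gt (2 / ε)
  have hεr : 2 ≤ ε * r := ((div_lt_iff₀' hε).1 hr).le
  have hr0 : r ≠ 0 := by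
    rintro rfl
    norm_num at hεr
  refine IsLittleO.of_pow (n := r) ?_ hr0
  have hlinear : ((fun m : ℕ ↦ (k : ℝ) ^ #m.primeFactors) ^ r) =O[atTop] fun m ↦ (m : ℝ) := by
    refine IsBigO.of_bound ((k ^ r : ℕ) ^ k ^ r : ℕ) ?_
    filter_upwards [eventually_ne_atTop 0] with m hm
    simpa [← pow_mul, mul_comm r] using
      (Nat.cast_le (α := ℝ)).2 (pow_card_primeFactors_le (k ^ r) hm)
  have hsq : (fun m : ℕ ↦ (m : ℝ)) =o[atTop] fun m ↦ (m : ℝ) ^ 2 := by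
    simpa [Function.comp_def] using (isLittleO_pow_pow_atTop_of_lt (𝕜 := ℝ) one_lt_two).comp_tendsto
      tendsto_natCast_atTop_atTop
  refine (hlinear.trans_isLittleO hsq).trans_isBigO (IsBigO.of_bound' ?_)
  filter_upwards [eventually_ge_atTop 1] with m hm
  have hm1 : (1 : ℝ) ≤ m := by exact_mod_cast hm
  rw [Pi.pow_apply, ← Real.rpow_mul_natCast (by positivity), ← Real.rpow_natCast]
  simp only [Real.norm_eq_abs, Real.abs_rpow_of_nonneg (Nat.cast_nonneg m), Nat.abs_cast]
  exact Real.rpow_le_rpow_of_exponent_le hm1 (by exact_mod_cast hεr)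

lemma isLittleO_sqrt_mul_two_pow_card_primeFactors_add_one :
    (fun m : ℕ ↦ √m * (2 ^ #m.primeFactors + 1)) =o[atTop] fun m ↦ (m : ℝ) := by
  have hpow : (fun m : ℕ ↦ (2 : ℝ) ^ #m.primeFactors) =o[atTop] fun m ↦ √(m : ℝ) := by
    simpa [Real.sqrt_eq_rpow] using isLittleO_pow_card_primeFactors 2 (ε := 1 / 2) (by norm_num)
  have hone : (fun _ : ℕ ↦ (1 : ℝ)) =o[atTop] fun m ↦ √(m : ℝ) :=
    (isLittleO_const_left_of_ne one_ne_zero).2 <|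
      tendsto_norm_atTop_atTop.comp (Real.tendsto_sqrt_atTop.comp tendsto_natCast_atTop_atTop)
  simpa using (isBigO_refl (fun m : ℕ ↦ √(m : ℝ)) atTop).mul_isLittleO (hpow.add hone)

lemma exists_mul_add_mul_eq_of_det_ne_zero {K : Type*} [Field K] {a b c d : K}
    (h : a * d - b * c ≠ 0) (A B : K) : ∃ X Y, X * a + Y * c = A ∧ X * b + Y * d = B :=
  ⟨(A * d - B * c) / (a * d - b * c), (B * a - A * b) / (a * d - b * c),
    by
      constructor <;>
        rw [div_mul_eq_mul_div, div_mul_eq_mul_div, ← add_div, div_eq_iff h] <;> ring⟩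

/-- Two linearly independent vectors `e`, `f` of the lattice `{(x, y) | G * x ≡ y [ZMOD m]}`, of
sup norm at most `W`. The coprimality condition lets translation by multiples of `e` reach points
of the lattice whose first coordinate is prime to `m`. -/
structure IsShortPair (m : ℕ) (G : ℤ) (W : ℝ) (e f : ℤ × ℤ) : Prop where
  modEq_left : G * e.1 ≡ e.2 [ZMOD m]
  modEq_right : G * f.1 ≡ f.2 [ZMOD m]
  det_ne_zero : e.1 * f.2 - e.2 * f.1 ≠ 0
  isCoprime_left : IsCoprime e.1 m
  norm_left_le : ‖e‖ ≤ W
  norm_right_le : ‖f‖ ≤ W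

lemma IsShortPair.exists_isCoprime_near {m : ℕ} {G : ℤ} {W : ℝ} {e f : ℤ × ℤ}
    (h : IsShortPair m G W e f) (hm : m ≠ 0) (A B : ℝ) :
    ∃ x y : ℤ, G * x ≡ y [ZMOD m] ∧ IsCoprime x m ∧
      |x - A| ≤ W * (2 ^ #m.primeFactors + 1) ∧ |y - B| ≤ W * (2 ^ #m.primeFactors + 1) := by
  obtain ⟨X, Y, rfl, rfl⟩ := exists_mul_add_mul_eq_of_det_ne_zero
    (a := (e.1 : ℝ)) (b := e.2) (c := f.1) (d := f.2) (by exact_mod_cast h.det_ne_zero) A B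
  obtain ⟨t, ht, hcop⟩ := exists_lt_two_pow_card_primeFactors_isCoprime_add_mul hm
    h.isCoprime_left (⌊X⌋ * e.1 + ⌊Y⌋ * f.1)
  have ht' : (t : ℝ) + 1 ≤ 2 ^ #m.primeFactors := by exact_mod_cast ht
  have hX : |((⌊X⌋ + t : ℤ) : ℝ) - X| ≤ 2 ^ #m.primeFactors := by
    push_cast
    rw [abs_le]
    constructor <;> linarith [Int.floor_le X, Int.lt_floor_add_one X, t.cast_nonneg (α := ℝ)]
  have hY : |(⌊Y⌋ : ℝ) - Y| ≤ 1 := by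
    rw [abs_le]
    constructor <;> linarith [Int.floor_le Y, Int.lt_floor_add_one Y]
  have near : ∀ {a b : ℤ}, ‖a‖ ≤ W → ‖b‖ ≤ W →
      |(((⌊X⌋ + t) * a + ⌊Y⌋ * b : ℤ) : ℝ) - (X * a + Y * b)| ≤ W * (2 ^ #m.primeFactors + 1) := by
    intro a b ha hb
    rw [Int.norm_eq_abs] at ha hb
    calc |(((⌊X⌋ + t) * a + ⌊Y⌋ * b : ℤ) : ℝ) - (X * a + Y * b)|
        = |(((⌊X⌋ + t : ℤ) : ℝ) - X) * a + (⌊Y⌋ - Y) * b| := by push_cast; ring_nf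
      _ ≤ |((⌊X⌋ + t : ℤ) : ℝ) - X| * |(a : ℝ)| + |⌊Y⌋ - Y| * |(b : ℝ)| := by
          simpa only [abs_mul] using
            abs_add_le ((((⌊X⌋ + t : ℤ) : ℝ) - X) * a) ((⌊Y⌋ - Y) * b)
      _ ≤ 2 ^ #m.primeFactors * W + 1 * W := by gcongr
      _ = W * (2 ^ #m.primeFactors + 1) := by ring
  refine ⟨(⌊X⌋ + t) * e.1 + ⌊Y⌋ * f.1, (⌊X⌋ + t) * e.2 + ⌊Y⌋ * f.2, ?_, ?_,
    near ((norm_fst_le e).trans h.norm_left_le) ((norm_fst_le f).trans h.norm_right_le),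
    near ((norm_snd_le e).trans h.norm_left_le) ((norm_snd_le f).trans h.norm_right_le)⟩
  · simpa only [mul_add, mul_left_comm G] using
      (h.modEq_left.mul_left (⌊X⌋ + t)).add (h.modEq_right.mul_left ⌊Y⌋)
  · convert hcop using 1
    ring

lemma fract_intCast_div_natCast_of_modEq {K : Type*} [Field K] [LinearOrder K]
    [IsStrictOrderedRing K] [FloorRing K] {m : ℕ} {b y : ℤ} (h : b ≡ y [ZMOD m]) (hy : 0 ≤ y)
    (hym : y < m) : Int.fract ((b : K) / m) = y / m := by
  rw [Int.fract_div_intCast_eq_div_intCast_mod, h, Int.emod_eq_of_lt hy hym]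

lemma div_mem_Ioo_of_abs_sub_lt {K : Type*} [Field K] [LinearOrder K] [IsStrictOrderedRing K]
    {x m u η : K} (hm : 0 < m) (h : |x - (u + η / 2) * m| < η / 2 * m) :
    x / m ∈ Set.Ioo u (u + η) := by
  rw [abs_lt] at h
  constructor
  · rw [lt_div_iff₀ hm]
    linarith
  · rw [div_lt_iff₀ hm]
    linarith

lemma eventually_exists_coprime_div_fract_mem_Icc (C : ℝ) {η : ℝ} (hη : 0 < η) :
    ∀ᶠ m : ℕ in atTop, ∀ {G : ℤ} {e f : ℤ × ℤ}, IsShortPair m G (C * √m) e f →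
      ∀ {u v : ℝ}, Set.Icc u (u + η) ⊆ Set.Icc 0 1 → Set.Icc v (v + η) ⊆ Set.Icc 0 1 →
        ∃ a : ℕ, 1 ≤ a ∧ a < m ∧ a.Coprime m ∧ (a : ℝ) / m ∈ Set.Icc u (u + η) ∧
          Int.fract ((G * a : ℝ) / m) ∈ Set.Icc v (v + η) := by
  have herror : ∀ᶠ m : ℕ in atTop, C * √m * (2 ^ #m.primeFactors + 1) ≤ η / 4 * m := by
    filter_upwards [(isLittleO_sqrt_mul_two_pow_card_primeFactors_add_one.const_mul_left C).def
      (by positivity : 0 < η / 4)] with m hm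
    simpa only [mul_assoc, Real.norm_natCast] using (le_abs_self _).trans hm
  filter_upwards [herror, eventually_gt_atTop 0] with m hsmall hm G e f hef u v hI hJ
  have hm' : (0 : ℝ) < m := Nat.cast_pos.2 hm
  have hlt : C * √m * (2 ^ #m.primeFactors + 1) < η / 2 * m := hsmall.trans_lt (by gcongr; norm_num)
  obtain ⟨x, y, hxy, hcop, hx, hy⟩ :=
    hef.exists_isCoprime_near hm.ne' ((u + η / 2) * m) ((v + η / 2) * m)
  have pos_and_lt : ∀ {w : ℝ} {z : ℤ}, (z : ℝ) / m ∈ Set.Ioo w (w + η) →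
      Set.Icc w (w + η) ⊆ Set.Icc 0 1 → 0 < z ∧ z < m := by
    intro w z hz hw
    rw [Set.Icc_subset_Icc_iff (by linarith)] at hw
    exact ⟨by exact_mod_cast (div_pos_iff_of_pos_right hm').1 (hw.1.trans_lt hz.1),
      by exact_mod_cast (div_lt_one hm').1 (hz.2.trans_le hw.2)⟩
  have hxu := div_mem_Ioo_of_abs_sub_lt hm' (hx.trans_lt hlt)
  have hyv := div_mem_Ioo_of_abs_sub_lt hm' (hy.trans_lt hlt)
  obtain ⟨hx0, hxm⟩ := pos_and_lt hxu hI
  obtain ⟨hy0, hym⟩ := pos_and_lt hyv hJ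
  lift x to ℕ using hx0.le
  refine ⟨x, by exact_mod_cast hx0, by exact_mod_cast hxm, Nat.isCoprime_iff_coprime.1 hcop,
    Set.Ioo_subset_Icc_self (by simpa using hxu), ?_⟩
  have hfract := fract_intCast_div_natCast_of_modEq (K := ℝ) hxy hy0.le hym
  push_cast at hfract
  exact hfract ▸ Set.Ioo_subset_Icc_self hyv

/-- **d'Ocagne's identity**. -/
lemma fib_add_mul_fib_succ_sub (j l : ℕ) :
    (Nat.fib (j + l) * Nat.fib (j + 1) - Nat.fib (j + l + 1) * Nat.fib j : ℤ) =
      (-1) ^ j * Nat.fib l := by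
  induction j with
  | zero => simp
  | succ j ih =>
    rw [show j + 1 + l = j + l + 1 by ring, Nat.fib_add_two (n := j),
      Nat.fib_add_two (n := j + l), pow_succ]
    push_cast
    linear_combination -ih

lemma coprime_fib_fib_add_succ {j l : ℕ} (hjl : j ≤ l) (hlj : l ≤ j + 1) :
    (Nat.fib j).Coprime (Nat.fib (j + l + 1)) := by
  have hdvd : j.gcd (j + l + 1) ∣ 2 := by
    obtain rfl | rfl : l = j ∨ l = j + 1 := by omega
    · simp [show l + l + 1 = 1 + 2 * l by ring]
    · simp [show j + (j + 1) + 1 = 2 + 2 * j by ring, Nat.gcd_dvd_right]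
  rw [Nat.Coprime, ← Nat.fib_gcd]
  rcases (Nat.dvd_prime Nat.prime_two).1 hdvd with h | h <;> simp [h]

lemma fib_succ_le_sqrt_two_mul_sqrt_fib {j l : ℕ} (hlj : l ≤ j + 1) :
    (Nat.fib (l + 1) : ℝ) ≤ √2 * √(Nat.fib (j + l + 1)) := by
  have hdouble : Nat.fib (l + 1) ≤ 2 * Nat.fib (j + 1) :=
    calc Nat.fib (l + 1) ≤ Nat.fib (j + 2) := Nat.fib_mono (by omega)
      _ = Nat.fib j + Nat.fib (j + 1) := Nat.fib_add_two
      _ ≤ 2 * Nat.fib (j + 1) := by linarith [Nat.fib_le_fib_succ (n := j)]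
  have hsq : Nat.fib (l + 1) ^ 2 ≤ 2 * Nat.fib (j + l + 1) :=
    calc Nat.fib (l + 1) ^ 2 = Nat.fib (l + 1) * Nat.fib (l + 1) := sq _
      _ ≤ 2 * Nat.fib (j + 1) * Nat.fib (l + 1) := by gcongr
      _ = 2 * (Nat.fib (j + 1) * Nat.fib (l + 1)) := mul_assoc ..
      _ ≤ 2 * Nat.fib (j + l + 1) := by
          rw [Nat.fib_add]
          gcongr
          exact Nat.le_add_left ..
  rw [← Real.sqrt_mul zero_le_two]
  exact Real.le_sqrt_of_sq_le (by exact_mod_cast hsq)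

lemma isShortPair_fib {j l : ℕ} (hjl : j ≤ l) (hlj : l ≤ j + 1) :
    IsShortPair (Nat.fib (j + l + 1)) (Nat.fib (j + l)) (√2 * √(Nat.fib (j + l + 1)))
      (Nat.fib j, -((-1) ^ j * Nat.fib (l + 1))) (Nat.fib (j + 1), (-1) ^ j * Nat.fib l) where
  modEq_left := by
    have hdocagne := fib_add_mul_fib_succ_sub j (l + 1)
    rw [← add_assoc, Nat.fib_add_two (n := j + l)] at hdocagne
    push_cast at hdocagne
    rw [Int.modEq_iff_dvd]
    exact ⟨Nat.fib j - Nat.fib (j + 1), by linear_combination hdocagne⟩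
  modEq_right := by
    rw [Int.modEq_iff_dvd, ← fib_add_mul_fib_succ_sub]
    exact ⟨-Nat.fib j, by ring⟩
  det_ne_zero := by
    have hdet : (Nat.fib j * ((-1) ^ j * Nat.fib l) -
        -((-1) ^ j * Nat.fib (l + 1)) * Nat.fib (j + 1) : ℤ) =
        (-1) ^ j * Nat.fib (j + l + 1) := by
      rw [Nat.fib_add]
      push_cast
      ring
    rw [hdet]
    simp
  isCoprime_left := Nat.isCoprime_iff_coprime.2 (coprime_fib_fib_add_succ hjl hlj)
  norm_left_le := by
    refine le_trans ?_ (fib_succ_le_sqrt_two_mul_sqrt_fib hlj)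
    simpa [Prod.norm_def, Int.norm_eq_abs, abs_mul] using Nat.fib_mono (by omega : j ≤ l + 1)
  norm_right_le := by
    refine le_trans ?_ (fib_succ_le_sqrt_two_mul_sqrt_fib hlj)
    simpa [Prod.norm_def, Int.norm_eq_abs, abs_mul] using
      And.intro (Nat.fib_mono (by omega : j + 1 ≤ l + 1)) Nat.fib_le_fib_succ

lemma tendsto_fib_atTop : Tendsto Nat.fib atTop atTop :=
  tendsto_atTop_mono' _ ((eventually_ge_atTop 5).mono fun _ ↦ Nat.le_fib_self) tendsto_id

/-- Lemma 1: for any two intervals `[u,u+η], [v,v+η] ⊆ [0,1]` and all `n` large enough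
there is an integer `a` with `1 ≤ a < F_n`, `gcd(a, F_n) = 1`, `a/F_n ∈ [u,u+η]` and
`{F_{n-1} a / F_n} ∈ [v,v+η]`. -/
theorem stmt_1 (u v η : ℝ) (hη : 0 < η)
    (hI : Set.Icc u (u + η) ⊆ Set.Icc (0 : ℝ) 1)
    (hJ : Set.Icc v (v + η) ⊆ Set.Icc (0 : ℝ) 1) :
    ∃ N : ℕ, ∀ n : ℕ, N ≤ n →
      ∃ a : ℕ, 1 ≤ a ∧ a < Nat.fib n ∧ Nat.gcd a (Nat.fib n) = 1 ∧
        (a : ℝ) / (Nat.fib n : ℝ) ∈ Set.Icc u (u + η) ∧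
        Int.fract ((Nat.fib (n - 1) : ℝ) * a / (Nat.fib n : ℝ)) ∈ Set.Icc v (v + η) := by
  rw [← eventually_atTop]
  have hfib := tendsto_fib_atTop.eventually (eventually_exists_coprime_div_fract_mem_Icc (√2) hη)
  filter_upwards [hfib, eventually_ge_atTop 1] with n hlarge hn
  obtain ⟨j, l, rfl, hjl, hlj⟩ : ∃ j l, n = j + l + 1 ∧ j ≤ l ∧ l ≤ j + 1 :=
    ⟨(n - 1) / 2, n / 2, by omega, by omega, by omega⟩
  simpa only [Int.cast_natCast, Nat.add_sub_cancel, Nat.coprime_iff_gcd_eq_one] using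
    hlarge (isShortPair_fib hjl hlj) hI hJ
end

section
/- For every ε > 0 there exists N such that for all n ≥ N, min_{x ∈ ℤ, 1 ≤ x < F_n} ‖x/F_n‖ · ‖F_{n−1}·x/F_n‖ ≥ 1/( F_n · ((3+√5)/2 + ε) ). -/
/-- The distance from a real number to the nearest integer. -/
noncomputable def distNearestInt (t : ℝ) : ℝ := |t - round t|

/-!
Modulo `F = F_{n+2}`, `‖x/F‖ · ‖F_{n+1} x/F‖ = |a| |b| / F²` for residues `a ≡ x` and
`b = F_{n+1} a - F m`. If `F_{k+1} ≤ |a| < F_{k+2}`, write `(a, m)` in the basis of consecutive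
convergents `(F_{k+1}, F_k)`, `(F_{k+2}, F_{k+1})` of `F / F_{n+1}`, whose values of `b` are
`F_{j+1}` and `-F_j` up to a common sign, where `n = k + j`. The bound on `|a|` forces coordinates
of opposite signs, so the two contributions to `b` do not cancel and `|b| ≥ F_{j+1}`. Hence
`|a| |b| ≥ F_{k+1} F_{j+1} ≥ F_n`, and `F_{n+2} / F_n → 1 + φ = (3 + √5) / 2`.
-/

open Filter Topology

theorem le_abs_mul_sub_mul_of_abs_lt {R : Type*} [CommRing R] [LinearOrder R]
    [IsStrictOrderedRing R] {q q' α β : R} {u v : ℤ} (hq : 0 ≤ q) (hα : 0 ≤ α) (hβ : 0 ≤ β)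
    (hne : u * q + v * q' ≠ 0) (hlt : |u * q + v * q'| < q') : α ≤ |u * α - v * β| := by
  have hq' : 0 < q' := (abs_nonneg _).trans_lt hlt
  wlog hu : 0 ≤ u generalizing u v
  · rw [abs_sub_comm]
    have hneg := @this (-u) (-v)
    simp only [Int.cast_neg, neg_mul, ← neg_add, neg_ne_zero, abs_neg, neg_sub_neg] at hneg
    exact hneg hne hlt (by omega)
  rcases hu.eq_or_lt with rfl | hu
  · rw [Int.cast_zero, zero_mul, zero_add] at hne hlt
    rw [abs_mul, abs_of_pos hq', mul_lt_iff_lt_one_left hq'] at hlt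
    have hv : v = 0 := Int.abs_lt_one_iff.mp (by exact_mod_cast hlt)
    simp [hv] at hne
  · have hu1 : (1 : R) ≤ u := by exact_mod_cast hu
    have hv : (v : R) ≤ 0 := by
      by_contra! hv
      have hv1 : (1 : R) ≤ v := by exact_mod_cast Int.cast_pos.mp hv
      nlinarith [le_abs_self (u * q + v * q')]
    calc α ≤ u * α := le_mul_of_one_le_left hα hu1
      _ ≤ u * α - v * β := by linarith [mul_nonpos_of_nonpos_of_nonneg hv hβ]
      _ ≤ |u * α - v * β| := le_abs_self _

theorem exists_fib_coordinates (k j : ℕ) (a m : ℤ) :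
    ∃ u v : ℤ, a = u * Nat.fib (k + 1) + v * Nat.fib (k + 2) ∧
      |Nat.fib (k + j + 1) * a - Nat.fib (k + j + 2) * m| =
        |u * Nat.fib (j + 1) - v * Nat.fib j| := by
  induction k generalizing j with
  | zero =>
    refine ⟨a - m, m, by simp, ?_⟩
    rw [zero_add, Nat.fib_add_two]
    push_cast
    congr 1
    ring
  | succ k ih =>
    obtain ⟨u, v, ha, hb⟩ := ih (j + 1)
    refine ⟨v - u, u, ?_, ?_⟩
    · rw [ha, Nat.fib_add_two (n := k + 1)]
      push_cast
      ring
    · rw [show k + 1 + j = k + (j + 1) by ring, hb, ← abs_neg, Nat.fib_add_two (n := j)]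
      push_cast
      congr 1
      ring

theorem fib_le_abs_fib_mul_sub_fib_mul (k j : ℕ) {a : ℤ} (m : ℤ) (ha : a ≠ 0)
    (hlt : |a| < Nat.fib (k + 2)) :
    (Nat.fib (j + 1) : ℤ) ≤ |Nat.fib (k + j + 1) * a - Nat.fib (k + j + 2) * m| := by
  obtain ⟨u, v, rfl, hb⟩ := exists_fib_coordinates k j a m
  rw [hb]
  exact le_abs_mul_sub_mul_of_abs_lt (by positivity) (by positivity) (by positivity) ha hlt

theorem fib_add_le_fib_succ_mul_fib_succ (k j : ℕ) :
    Nat.fib (k + j) ≤ Nat.fib (k + 1) * Nat.fib (j + 1) := by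
  cases k with
  | zero => simpa using Nat.fib_le_fib_succ
  | succ k =>
    calc Nat.fib (k + 1 + j)
        = Nat.fib k * Nat.fib j + Nat.fib (k + 1) * Nat.fib (j + 1) := by
          rw [add_right_comm, Nat.fib_add]
      _ ≤ Nat.fib k * Nat.fib (j + 1) + Nat.fib (k + 1) * Nat.fib (j + 1) := by
          gcongr
          exact j.le_succ
      _ = Nat.fib (k + 1 + 1) * Nat.fib (j + 1) := by rw [Nat.fib_add_two, add_mul]

theorem exists_fib_succ_le_lt_fib_add_two {a : ℕ} (ha : a ≠ 0) :
    ∃ k, Nat.fib (k + 1) ≤ a ∧ a < Nat.fib (k + 2) := by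
  obtain ⟨k, hk⟩ := Nat.exists_eq_add_one.mpr (Nat.greatestFib_pos.mpr ha.bot_lt)
  exact ⟨k, hk ▸ Nat.fib_greatestFib_le a, Nat.greatestFib_lt.mp (by omega)⟩

theorem fib_le_abs_mul_abs_fib_mul_sub_fib_mul (n : ℕ) {a : ℤ} (m : ℤ) (ha : a ≠ 0)
    (hlt : |a| < Nat.fib (n + 2)) :
    (Nat.fib n : ℤ) ≤ |a| * |Nat.fib (n + 1) * a - Nat.fib (n + 2) * m| := by
  obtain ⟨k, hk, hk'⟩ := exists_fib_succ_le_lt_fib_add_two (Int.natAbs_ne_zero.mpr ha)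
  zify at hk hk'
  have hkn : k + 1 < n + 2 := Nat.fib_mono.reflect_lt (by exact_mod_cast hk.trans_lt hlt)
  obtain ⟨j, rfl⟩ := Nat.exists_eq_add_of_le (show k ≤ n by omega)
  calc (Nat.fib (k + j) : ℤ)
      ≤ Nat.fib (k + 1) * Nat.fib (j + 1) := by
        exact_mod_cast fib_add_le_fib_succ_mul_fib_succ k j
    _ ≤ |a| * |Nat.fib (k + j + 1) * a - Nat.fib (k + j + 2) * m| := by
        gcongr
        exact fib_le_abs_fib_mul_sub_fib_mul k j m ha hk'

theorem exists_modEq_distNearestInt_div_eq (p : ℤ) {q : ℕ} (hq : 0 < q) :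
    ∃ r : ℤ, r ≡ p [ZMOD q] ∧ 2 * |r| ≤ q ∧ distNearestInt (p / q) = |(r : ℝ)| / q := by
  have hq' : (0 : ℝ) < q := by exact_mod_cast hq
  set s := round ((p : ℝ) / q)
  have hdist : distNearestInt (p / q) = |((p - q * s : ℤ) : ℝ)| / q := by
    rw [distNearestInt, ← abs_of_pos hq', ← abs_div, abs_of_pos hq']
    push_cast
    rw [sub_div, mul_div_cancel_left₀ _ hq'.ne']
  refine ⟨p - q * s, Int.modEq_iff_dvd.mpr ⟨s, by ring⟩, ?_, hdist⟩
  have hhalf : |((p - q * s : ℤ) : ℝ)| / q ≤ 1 / 2 := hdist ▸ abs_sub_round _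
  rw [div_le_div_iff₀ hq' two_pos, one_mul, mul_comm] at hhalf
  exact_mod_cast hhalf

theorem fib_div_sq_le_distNearestInt_mul_distNearestInt (n : ℕ) {x : ℤ}
    (hx : ¬ (Nat.fib (n + 2) : ℤ) ∣ x) :
    (Nat.fib n : ℝ) / Nat.fib (n + 2) ^ 2 ≤
      distNearestInt (x / Nat.fib (n + 2)) *
        distNearestInt (Nat.fib (n + 1) * x / Nat.fib (n + 2)) := by
  have hF : 0 < Nat.fib (n + 2) := Nat.fib_pos.mpr (by omega)
  obtain ⟨a, hax, ha, hdist_a⟩ := exists_modEq_distNearestInt_div_eq x hF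
  obtain ⟨b, hbx, -, hdist_b⟩ := exists_modEq_distNearestInt_div_eq (Nat.fib (n + 1) * x) hF
  obtain ⟨m, hm⟩ := (hbx.trans (hax.symm.mul_left _)).dvd
  obtain rfl : b = Nat.fib (n + 1) * a - Nat.fib (n + 2) * m := by linarith
  have ha0 : a ≠ 0 := by
    rintro rfl
    exact hx (Int.modEq_zero_iff_dvd.mp hax.symm)
  have hmul := fib_le_abs_mul_abs_fib_mul_sub_fib_mul n m ha0 (by omega)
  rw [Int.cast_mul, Int.cast_natCast] at hdist_b
  rw [hdist_a, hdist_b, div_mul_div_comm, ← sq]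
  gcongr
  exact_mod_cast hmul

theorem tendsto_fib_add_two_div_fib :
    Tendsto (fun n ↦ (Nat.fib (n + 2) / Nat.fib n : ℝ)) atTop (𝓝 (1 + Real.goldenRatio)) := by
  refine (tendsto_fib_succ_div_fib_atTop.const_add 1).congr' ?_
  filter_upwards [eventually_gt_atTop 0] with n hn
  have hpos : (0 : ℝ) < Nat.fib n := by exact_mod_cast Nat.fib_pos.mpr hn
  rw [Nat.fib_add_two, Nat.cast_add, add_div, div_self hpos.ne']

theorem eventually_fib_add_two_lt_fib_mul {c : ℝ} (hc : 1 + Real.goldenRatio < c) :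
    ∀ᶠ n in atTop, (Nat.fib (n + 2) : ℝ) < Nat.fib n * c := by
  filter_upwards [tendsto_fib_add_two_div_fib.eventually_lt_const hc, eventually_gt_atTop 0]
    with n hlt hn
  rwa [div_lt_iff₀' (by exact_mod_cast Nat.fib_pos.mpr hn)] at hlt

/-- For every ε > 0 and all large `n`,
`min_{1 ≤ x < F_n} ‖x/F_n‖ · ‖F_{n-1} x / F_n‖ ≥ 1/(F_n ((3+√5)/2 + ε))`. -/
theorem stmt_6 (ε : ℝ) (hε : 0 < ε) :
    ∃ N : ℕ, ∀ n : ℕ, N ≤ n → ∀ x : ℤ, 1 ≤ x → x < (Nat.fib n : ℤ) →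
      distNearestInt ((x : ℝ) / (Nat.fib n : ℝ)) *
          distNearestInt ((Nat.fib (n - 1) : ℝ) * (x : ℝ) / (Nat.fib n : ℝ)) ≥
        1 / ((Nat.fib n : ℝ) * ((3 + Real.sqrt 5) / 2 + ε)) := by
  have hc : 1 + Real.goldenRatio < (3 + √5) / 2 + ε := by
    rw [Real.goldenRatio]
    linarith
  obtain ⟨N, hN⟩ := eventually_atTop.mp (eventually_fib_add_two_lt_fib_mul hc)
  refine ⟨N + 2, fun n hn x hx1 hxn ↦ ?_⟩
  obtain ⟨n, rfl⟩ := Nat.exists_eq_add_of_le' (show 2 ≤ n by omega)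
  have hF : (0 : ℝ) < Nat.fib (n + 2) := by exact_mod_cast Nat.fib_pos.mpr (by omega)
  have hx : ¬ (Nat.fib (n + 2) : ℤ) ∣ x := fun h ↦ (Int.le_of_dvd hx1 h).not_gt hxn
  calc 1 / ((Nat.fib (n + 2) : ℝ) * ((3 + √5) / 2 + ε))
      ≤ Nat.fib n / Nat.fib (n + 2) ^ 2 := by
        rw [div_le_div_iff₀ (by positivity) (by positivity)]
        nlinarith [hN n (by omega)]
    _ ≤ _ := fib_div_sq_le_distNearestInt_mul_distNearestInt n hx
end

section
/- There exist real numbers ξ and ζ such that limsup_{Q→∞} Q · ( min_{x ∈ ℤ, 1 ≤ x < Q} ‖xξ‖ · ‖xζ‖ ) ≥ 0.005326. -/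
/-!
Let `l² + 1 = 2 Q²`, so that `l / Q ≈ √2`, and suppose `b ≡ l a (mod Q)` with `a` a unit modulo `Q`.
For `1 ≤ x < Q` let `X` and `W` be the least absolute residues of `x a` and `x b` modulo `Q`. Then
`X ≠ 0` and `W ≡ l X (mod Q)`, and since the norm form of `ℤ[√2]` is anisotropic, this forces
`|X| |W| > Q / 4`. Hence `Q ‖x a / Q‖ ‖x b / Q‖ > 1 / 4`, which for a given `Q` is an open condition
on the pair `(a / Q, b / Q)`.

For integers `m, n, m', n'` the pair `a = m Q + n l + n'`, `b = m' Q + n' l - n` satisfies this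
congruence, and `a` is a unit modulo `Q` once `Q` is prime to `n² + n'²`. Since `(a / Q, b / Q)` is
close to `(m + n √2, m' + n' √2)`, such pairs with `Q` arbitrarily large are dense in the plane, and
by Baire's theorem a generic pair `(ξ, ζ)` satisfies the condition for infinitely many `Q`.
-/

open Filter Set

section DistNearestInt

lemma distNearestInt_nonneg (t : ℝ) : 0 ≤ distNearestInt t := abs_nonneg _

lemma distNearestInt_le_half (t : ℝ) : distNearestInt t ≤ 1 / 2 := abs_sub_round t

lemma continuous_distNearestInt : Continuous distNearestInt := by
  have eq_norm : distNearestInt = fun t : ℝ => ‖(t : UnitAddCircle)‖ :=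
    funext fun _ => UnitAddCircle.norm_eq.symm
  rw [eq_norm]
  exact continuous_norm.comp (AddCircle.continuous_mk' 1)

lemma exists_modEq_distNearestInt_div_eq_s11 (c : ℤ) {Q : ℤ} (hQ : 0 < Q) :
    ∃ X : ℤ, X ≡ c [ZMOD Q] ∧ 2 * |X| ≤ Q ∧ distNearestInt (c / Q) = |(X : ℝ)| / Q := by
  have hQr : (0 : ℝ) < Q := by exact_mod_cast hQ
  set r := round ((c : ℝ) / Q) with hr
  have dist_eq : distNearestInt (c / Q) = |((c - Q * r : ℤ) : ℝ)| / Q := by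
    rw [distNearestInt, ← hr, ← abs_of_pos hQr, ← abs_div, abs_of_pos hQr]
    push_cast
    congr 1
    field_simp
  refine ⟨c - Q * r, Int.modEq_iff_dvd.mpr ⟨r, by ring⟩, ?_, dist_eq⟩
  have le_half := distNearestInt_le_half ((c : ℝ) / Q)
  rw [dist_eq, div_le_iff₀ hQr] at le_half
  have : 2 * |((c - Q * r : ℤ) : ℝ)| ≤ Q := by linarith
  exact_mod_cast this

end DistNearestInt

section NegativePell

lemma not_isSquare_mul_sq {d x : ℤ} (hd : ¬IsSquare d) (hx : x ≠ 0) : ¬IsSquare (d * x ^ 2) := by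
  rintro ⟨r, hr⟩
  obtain ⟨k, rfl⟩ : x ∣ r :=
    (Int.pow_dvd_pow_iff two_ne_zero).mp ⟨d, by linear_combination -hr⟩
  exact hd ⟨k, mul_right_cancel₀ (pow_ne_zero 2 hx) (by linear_combination hr)⟩

lemma not_isSquare_two_mul_sq {x : ℤ} (hx : x ≠ 0) : ¬IsSquare (2 * x ^ 2) :=
  not_isSquare_mul_sq Int.prime_two.not_isSquare hx

lemma exists_negPell_isCoprime {m : ℤ} (hm : 0 < m) :
    ∃ l Q : ℤ, 0 < l ∧ m < Q ∧ l ^ 2 + 1 = 2 * Q ^ 2 ∧ IsCoprime Q m := by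
  obtain ⟨s, hx, hy⟩ :=
    Pell.Solution₁.exists_pos_of_not_isSquare (by positivity) (not_isSquare_two_mul_sq hm.ne')
  have hpell := s.prop
  have hmy : m ≤ m * s.y := le_mul_of_one_le_right hm.le hy
  -- The unit `(1 + √2) * (s.x + m * s.y * √2)` of `ℤ[√2]` has norm `-1`.
  refine ⟨s.x + 2 * (m * s.y), s.x + m * s.y, by linarith, by linarith, ?_, ?_⟩
  · linear_combination -hpell
  · exact ⟨s.x - m * s.y, -(m * s.y ^ 2), by linear_combination hpell⟩

variable {l Q : ℤ} (hpell : l ^ 2 + 1 = 2 * Q ^ 2)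
include hpell

lemma abs_sub_sqrt_two_mul_le_one (hl : 0 < l) (hQ : 0 < Q) : |(l : ℝ) - √2 * Q| ≤ 1 := by
  have hlr : (1 : ℝ) ≤ l := by exact_mod_cast hl
  have hQr : (0 : ℝ) < Q := by exact_mod_cast hQ
  have hpell_real : (l : ℝ) ^ 2 + 1 = 2 * (Q : ℝ) ^ 2 := by exact_mod_cast hpell
  have sum_ge_one : 1 ≤ l + √2 * Q := by linarith [mul_pos (Real.sqrt_pos.mpr two_pos) hQr]
  have mul_eq : (l - √2 * Q) * (l + √2 * Q) = -1 := by
    linear_combination hpell_real - (Q : ℝ) ^ 2 * Real.sq_sqrt (zero_le_two (α := ℝ))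
  calc |(l : ℝ) - √2 * Q| ≤ |(l : ℝ) - √2 * Q| * (l + √2 * Q) :=
        le_mul_of_one_le_right (abs_nonneg _) sum_ge_one
    _ = |(l - √2 * Q) * (l + √2 * Q)| := by rw [abs_mul, abs_of_pos (by linarith : 0 < l + √2 * Q)]
    _ = 1 := by rw [mul_eq, abs_neg, abs_one]

lemma sq_le_abs_sq_sub_sq_add {X W : ℤ} (hX : X ≠ 0) (hW : W ≡ l * X [ZMOD Q]) :
    Q ^ 2 ≤ |W ^ 2 - X ^ 2| + 2 * |l| * (|X| * |W|) := by
  obtain ⟨y, hy⟩ := Int.modEq_iff_dvd.mp hW.symm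
  obtain rfl : W = l * X + Q * y := by linarith
  have norm_ne_zero : y ^ 2 - 2 * X ^ 2 ≠ 0 := fun h =>
    not_isSquare_two_mul_sq hX ⟨y, by linear_combination -h⟩
  calc Q ^ 2 ≤ Q ^ 2 * |y ^ 2 - 2 * X ^ 2| :=
        le_mul_of_one_le_right (sq_nonneg Q) (Int.one_le_abs norm_ne_zero)
    _ = |Q ^ 2 * (y ^ 2 - 2 * X ^ 2)| := by rw [abs_mul, abs_sq]
    _ = |((l * X + Q * y) ^ 2 - X ^ 2) - 2 * l * (X * (l * X + Q * y))| := by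
        congr 1
        linear_combination X ^ 2 * hpell
    _ ≤ _ := (abs_sub _ _).trans_eq (by simp only [abs_mul, abs_two])

lemma lt_four_mul_abs_mul_abs {X W : ℤ} (hX : X ≠ 0) (hXQ : 2 * |X| ≤ Q) (hWQ : 2 * |W| ≤ Q)
    (hW : W ≡ l * X [ZMOD Q]) : Q < 4 * (|X| * |W|) := by
  have hQ : 0 < Q := by linarith [abs_pos.mpr hX]
  have sq_diff_le : 4 * |W ^ 2 - X ^ 2| ≤ Q ^ 2 := by
    have hX_sq : (2 * |X|) ^ 2 ≤ Q ^ 2 := by gcongr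
    have hW_sq : (2 * |W|) ^ 2 ≤ Q ^ 2 := by gcongr
    rw [mul_pow, sq_abs] at hX_sq hW_sq
    rw [← abs_of_pos (zero_lt_four (α := ℤ)), ← abs_mul, mul_sub]
    exact abs_sub_le_of_nonneg_of_le (by positivity) hW_sq (by positivity) hX_sq
  have l_lt : 2 * |l| < 3 * Q := by
    refine lt_of_pow_lt_pow_left₀ 2 (by positivity) ?_
    rw [mul_pow, sq_abs]
    nlinarith
  have norm_le := sq_le_abs_sq_sub_sq_add hpell hX hW
  by_contra! hle
  have : 4 * Q ^ 2 < 4 * Q ^ 2 :=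
    calc 4 * Q ^ 2 ≤ 4 * |W ^ 2 - X ^ 2| + 2 * |l| * (4 * (|X| * |W|)) := by linarith
      _ ≤ Q ^ 2 + 2 * |l| * Q := by gcongr
      _ < Q ^ 2 + 3 * Q * Q := by gcongr
      _ = 4 * Q ^ 2 := by ring
  exact this.false

lemma one_div_four_lt_mul_distNearestInt_div {a b : ℤ} (hQ : 0 < Q) (hab : b ≡ l * a [ZMOD Q])
    {x : ℤ} (hx : ¬Q ∣ x * a) :
    1 / 4 < Q * (distNearestInt ((x * a : ℤ) / Q) * distNearestInt ((x * b : ℤ) / Q)) := by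
  have hQr : (0 : ℝ) < Q := by exact_mod_cast hQ
  obtain ⟨X, hXa, hXQ, dist_a⟩ := exists_modEq_distNearestInt_div_eq_s11 (x * a) hQ
  obtain ⟨W, hWb, hWQ, dist_b⟩ := exists_modEq_distNearestInt_div_eq_s11 (x * b) hQ
  have hX : X ≠ 0 := by
    rintro rfl
    exact hx (Int.modEq_zero_iff_dvd.mp hXa.symm)
  have hWX : W ≡ l * X [ZMOD Q] :=
    calc W ≡ x * b [ZMOD Q] := hWb
      _ ≡ x * (l * a) [ZMOD Q] := hab.mul_left x
      _ = l * (x * a) := by ring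
      _ ≡ l * X [ZMOD Q] := hXa.symm.mul_left l
  have hlt : (Q : ℝ) < 4 * (|(X : ℝ)| * |(W : ℝ)|) := by
    exact_mod_cast lt_four_mul_abs_mul_abs hpell hX hXQ hWQ hWX
  calc (1 / 4 : ℝ) < |(X : ℝ)| * |(W : ℝ)| / Q := by rw [lt_div_iff₀ hQr]; linarith
    _ = _ := by rw [dist_a, dist_b]; field_simp

end NegativePell

section LargeProductSet

/-- The pairs `(ξ, ζ)` with `Q ‖xξ‖ ‖xζ‖ > c` for all `1 ≤ x < Q`. The strict inequality makes
this set open. -/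
def largeProductSet (c : ℝ) (Q : ℕ) : Set (ℝ × ℝ) :=
  {p | ∀ x ∈ Finset.Ico 1 Q, c < Q * (distNearestInt (x * p.1) * distNearestInt (x * p.2))}

lemma isOpen_largeProductSet (c : ℝ) (Q : ℕ) : IsOpen (largeProductSet c Q) := by
  have hcont := continuous_distNearestInt
  simp only [largeProductSet, ofPred_forall]
  exact isOpen_biInter_finset fun x _ => isOpen_lt (by fun_prop) (by fun_prop)

lemma div_mem_largeProductSet {Q : ℕ} {l a b : ℤ} (hpell : l ^ 2 + 1 = 2 * (Q : ℤ) ^ 2)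
    (hab : b ≡ l * a [ZMOD Q]) (ha : IsCoprime (Q : ℤ) a) :
    ((a / Q, b / Q) : ℝ × ℝ) ∈ largeProductSet (1 / 4) Q := by
  intro x hx
  obtain ⟨one_le, lt_Q⟩ := Finset.mem_Ico.mp hx
  have not_dvd : ¬(Q : ℤ) ∣ x * a := fun h =>
    Nat.not_dvd_of_pos_of_lt one_le lt_Q (Int.natCast_dvd_natCast.mp (ha.dvd_of_dvd_mul_right h))
  simpa [mul_div_assoc] using
    one_div_four_lt_mul_distNearestInt_div hpell (by omega) hab not_dvd

end LargeProductSet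

section Density

lemma dense_setOf_int_add_ne_zero_mul {α : ℝ} (hα : Irrational α) :
    Dense {t : ℝ | ∃ m n : ℤ, n ≠ 0 ∧ m + n * α = t} := by
  have dense_subgroup : Dense (AddSubgroup.closure {1, α} : Set ℝ) :=
    dense_addSubgroupClosure_pair_iff.mpr (by simpa using hα.inv)
  have isOpen_nonint : IsOpen (range ((↑) : ℤ → ℝ))ᶜ :=
    Int.isClosedEmbedding_coe_real.isClosed_range.isOpen_compl
  refine (dense_subgroup.inter_of_isOpen_right
    ((countable_range _).dense_compl ℝ) isOpen_nonint).mono ?_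
  rintro t ⟨ht, t_nonint⟩
  obtain ⟨m, n, rfl⟩ := AddSubgroup.mem_closure_pair.mp ht
  refine ⟨m, n, ?_, by simp⟩
  rintro rfl
  exact t_nonint ⟨m, by simp⟩

section LinearCombination

variable {l Q : ℤ} (hpell : l ^ 2 + 1 = 2 * Q ^ 2)
include hpell

lemma modEq_mul_linearCombination (m n m' n' : ℤ) :
    m' * Q + n' * l - n ≡ l * (m * Q + n * l + n') [ZMOD Q] :=
  Int.modEq_iff_dvd.mpr
    ⟨l * m + 2 * n * Q - m', by linear_combination n * hpell⟩

lemma isCoprime_linearCombination (m : ℤ) {n n' : ℤ} (h : IsCoprime Q (n ^ 2 + n' ^ 2)) :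
    IsCoprime Q (m * Q + n * l + n') := by
  have norm_eq : (n' + n * l) * (n' - n * l) = n ^ 2 + n' ^ 2 + Q * (-2 * n ^ 2 * Q) := by
    linear_combination -n ^ 2 * hpell
  have coprime_norm : IsCoprime Q ((n' + n * l) * (n' - n * l)) := by
    rw [norm_eq]
    exact h.add_mul_left_right _
  rw [show m * Q + n * l + n' = n' + n * l + Q * m by ring]
  exact coprime_norm.of_mul_right_left.add_mul_left_right m

lemma abs_linearCombination_div_sub_le (hl : 0 < l) (hQ : 0 < Q) (m n k : ℝ) :
    |(m * Q + n * l + k) / Q - (m + n * √2)| ≤ (|n| + |k|) / Q := by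
  have hQr : (0 : ℝ) < Q := by exact_mod_cast hQ
  have eq_div : (m * Q + n * l + k) / Q - (m + n * √2) = (n * (l - √2 * Q) + k) / Q := by
    field_simp
    ring
  rw [eq_div, abs_div, abs_of_pos hQr]
  gcongr
  calc |n * (l - √2 * Q) + k| ≤ |n| * |l - √2 * Q| + |k| := by
        rw [← abs_mul]
        exact abs_add_le _ _
    _ ≤ |n| + |k| := by
        gcongr
        exact mul_le_of_le_one_right (abs_nonneg n) (abs_sub_sqrt_two_mul_le_one hpell hl hQ)

end LinearCombination

lemma exists_largeProductSet_dist_lt (m m' n' : ℤ) {n : ℤ} (hn : n ≠ 0) (N : ℕ) {ε : ℝ}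
    (hε : 0 < ε) :
    ∃ Q ≥ N, ∃ p ∈ largeProductSet (1 / 4) Q, dist ((m + n * √2, m' + n' * √2) : ℝ × ℝ) p < ε := by
  obtain ⟨K, hK⟩ := exists_nat_gt ((|(n : ℝ)| + |(n' : ℝ)|) / ε)
  have norm_pos : 0 < n ^ 2 + n' ^ 2 := by positivity
  obtain ⟨l, Q, hl, hQ, hpell, hcoprime⟩ :=
    exists_negPell_isCoprime (m := (N + K + 1) * (n ^ 2 + n' ^ 2)) (by positivity)
  have hNK : (N : ℤ) + K < Q := by nlinarith
  lift Q to ℕ using by omega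
  have hQ_pos : (0 : ℤ) < Q := by omega
  have error_lt : (|(n : ℝ)| + |(n' : ℝ)|) / Q < ε := by
    have hKQ : (K : ℝ) < Q := by exact_mod_cast (by omega : (K : ℤ) < Q)
    rw [div_lt_comm₀ (by exact_mod_cast hQ_pos) hε]
    exact hK.trans hKQ
  refine ⟨Q, by omega, _, div_mem_largeProductSet hpell
    (modEq_mul_linearCombination hpell m n m' n')
    (isCoprime_linearCombination hpell m hcoprime.of_mul_right_right), ?_⟩
  rw [dist_comm, Prod.dist_eq, max_lt_iff, Real.dist_eq, Real.dist_eq]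
  have error_fst := abs_linearCombination_div_sub_le hpell hl hQ_pos m n n'
  have error_snd := abs_linearCombination_div_sub_le hpell hl hQ_pos m' n' (-n)
  rw [abs_neg, add_comm |(n' : ℝ)|, ← sub_eq_add_neg] at error_snd
  push_cast at error_fst error_snd ⊢
  exact ⟨error_fst.trans_lt error_lt, error_snd.trans_lt error_lt⟩

lemma dense_iUnion_largeProductSet (N : ℕ) : Dense (⋃ Q ≥ N, largeProductSet (1 / 4) Q) := by
  have dense_coord := dense_setOf_int_add_ne_zero_mul irrational_sqrt_two
  refine dense_closure.mp ((dense_coord.prod dense_coord).mono ?_)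
  rintro ⟨_, _⟩ ⟨⟨m, n, hn, rfl⟩, ⟨m', n', -, rfl⟩⟩
  refine Metric.mem_closure_iff.mpr fun ε hε => ?_
  obtain ⟨Q, hQ, p, hp, hdist⟩ := exists_largeProductSet_dist_lt m m' n' hn N hε
  exact ⟨p, mem_biUnion hQ hp, hdist⟩

end Density

lemma eventually_residual_frequently_mem {X : Type*} [TopologicalSpace X] {U : ℕ → Set X}
    (hopen : ∀ n, IsOpen (U n)) (hdense : ∀ N, Dense (⋃ n ≥ N, U n)) :
    ∀ᶠ p in residual X, ∃ᶠ n in atTop, p ∈ U n := by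
  simp only [frequently_atTop]
  refine eventually_countable_forall.mpr fun N => ?_
  filter_upwards [residual_of_dense_open (isOpen_biUnion fun n _ => hopen n) (hdense N)] with p hp
  obtain ⟨n, hn, hpn⟩ := mem_iUnion₂.mp hp
  exact ⟨n, hn, hpn⟩

section MinDistProd

/-- The minimum of `‖xξ‖ ‖xζ‖` over `1 ≤ x < Q`. For `Q ≤ 1` no such `x` exists and the value is
`sInf ∅ = 0`. -/
noncomputable def minDistProd (Q : ℕ) (ξ ζ : ℝ) : ℝ :=
  sInf {y : ℝ | ∃ x : ℕ, 1 ≤ x ∧ x < Q ∧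
    y = distNearestInt ((x : ℝ) * ξ) * distNearestInt ((x : ℝ) * ζ)}

variable {Q : ℕ} (hQ : 1 < Q)
include hQ

lemma mul_minDistProd_le_half (ξ ζ : ℝ) : Q * minDistProd Q ξ ζ ≤ 1 / 2 := by
  have hQr : (0 : ℝ) < Q := by positivity
  obtain ⟨k, one_le, le_pred, dist_le⟩ :=
    Real.exists_nat_abs_mul_sub_round_le ξ (Nat.sub_pos_of_lt hQ)
  rw [Nat.cast_pred (by omega), sub_add_cancel] at dist_le
  have bddBelow : BddBelow {y : ℝ | ∃ x : ℕ, 1 ≤ x ∧ x < Q ∧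
      y = distNearestInt (x * ξ) * distNearestInt (x * ζ)} := by
    refine ⟨0, ?_⟩
    rintro _ ⟨x, -, -, rfl⟩
    exact mul_nonneg (distNearestInt_nonneg _) (distNearestInt_nonneg _)
  calc Q * minDistProd Q ξ ζ ≤ Q * (distNearestInt (k * ξ) * distNearestInt (k * ζ)) := by
        gcongr
        exact csInf_le bddBelow ⟨k, one_le, by omega, rfl⟩
    _ ≤ Q * (1 / Q * (1 / 2)) := by
        gcongr
        exacts [distNearestInt_nonneg _, dist_le, distNearestInt_le_half _]
    _ = 1 / 2 := by rw [← mul_assoc, mul_one_div_cancel hQr.ne', one_mul]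

lemma le_mul_minDistProd_of_mem {c : ℝ} {p : ℝ × ℝ} (hp : p ∈ largeProductSet c Q) :
    c ≤ Q * minDistProd Q p.1 p.2 := by
  have hQr : (0 : ℝ) < Q := by positivity
  rw [← div_le_iff₀' hQr]
  refine le_csInf ⟨_, 1, le_rfl, hQ, rfl⟩ ?_
  rintro _ ⟨x, one_le, lt_Q, rfl⟩
  rw [div_le_iff₀' hQr]
  exact (hp x (Finset.mem_Ico.mpr ⟨one_le, lt_Q⟩)).le

end MinDistProd

lemma le_limsup_mul_minDistProd {c : ℝ} {p : ℝ × ℝ}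
    (hp : ∃ᶠ Q in atTop, p ∈ largeProductSet c Q) :
    c ≤ limsup (fun Q : ℕ => Q * minDistProd Q p.1 p.2) atTop := by
  refine le_limsup_of_frequently_le ?_ (isBoundedUnder_of_eventually_le (a := 1 / 2) ?_)
  · exact (hp.and_eventually (eventually_gt_atTop 1)).mono fun Q h =>
      le_mul_minDistProd_of_mem h.2 h.1
  · filter_upwards [eventually_gt_atTop 1] with Q hQ
    exact mul_minDistProd_le_half hQ p.1 p.2

theorem stmt_11_general : ∀ᶠ p : ℝ × ℝ in residual (ℝ × ℝ),
    1 / 4 ≤ limsup (fun Q : ℕ => Q * minDistProd Q p.1 p.2) atTop :=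
  (eventually_residual_frequently_mem (isOpen_largeProductSet (1 / 4))
    dense_iUnion_largeProductSet).mono fun _ hp => le_limsup_mul_minDistProd hp

/-- There exist real numbers ξ and ζ such that
`limsup_{Q→∞} Q · (min_{x ∈ ℤ, 1 ≤ x < Q} ‖xξ‖·‖xζ‖) ≥ 0.005326`. -/
theorem stmt_11 :
    ∃ ξ ζ : ℝ,
      (0.005326 : ℝ) ≤
        Filter.limsup
          (fun Q : ℕ =>
            (Q : ℝ) *
              sInf {y : ℝ | ∃ x : ℕ, 1 ≤ x ∧ x < Q ∧
                y = distNearestInt ((x : ℝ) * ξ) * distNearestInt ((x : ℝ) * ζ)})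
          Filter.atTop := by
  obtain ⟨⟨ξ, ζ⟩, h⟩ := (dense_of_mem_residual stmt_11_general).nonempty
  exact ⟨ξ, ζ, le_trans (by norm_num) h⟩
end
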